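/- arXiv:2205.04303 — 4 statements merged into one kernel-verified Lean document; each statement's English description precedes it below -/
import Mathlib

section
/- Let α ∈ ℝ, d ∈ ℕ, f ∈ D_α∖{0}, and let {f_n} ⊂ D_α∖{0} with ‖f_n − f‖_α → 0. Let p_d and p_{d,n} denote the d-th optimal polynomial approximants to 1/f and 1/f_n, let M and M_n be the (d+1)×(d+1) matrices with entries ⟨S^k f, S^j f⟩_α and ⟨S^k f_n, S^j f_n⟩_α, and let b, b_n ∈ ℂ^{d+1} have entries ⟨1, S^j f⟩_α and ⟨1, S^j f_n⟩_α. Then ‖b_n − b‖ → 0, ‖M_n − M‖_F → 0, and ‖p_{d,n} − p_d‖_α → 0 as n → ∞; moreover there exist a constant C = C(d, α, f) > 0 and N ∈ ℕ such that each of these three quantities is bounded above by C·‖f_n − f‖_α for all n ≥ N. -/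
open Filter Topology

noncomputable section

/-- Membership in the Dirichlet-type space `D_α`, described via Taylor coefficients. -/
def MemD (α : ℝ) (a : ℕ → ℂ) : Prop :=
  Summable (fun k : ℕ => ‖a k‖ ^ 2 * ((k : ℝ) + 1) ^ α)

/-- The norm of `D_α`, on coefficient sequences. -/
def DNorm (α : ℝ) (a : ℕ → ℂ) : ℝ :=
  Real.sqrt (∑' k : ℕ, ‖a k‖ ^ 2 * ((k : ℝ) + 1) ^ α)

/-- The inner product of `D_α`, on coefficient sequences. -/
def Dinner (α : ℝ) (a b : ℕ → ℂ) : ℂ :=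
  ∑' k : ℕ, a k * (starRingEnd ℂ) (b k) * ((((k : ℝ) + 1) ^ α : ℝ) : ℂ)

/-- Cauchy product of coefficient sequences (coefficients of the product function). -/
def mulCoeff (a b : ℕ → ℂ) : ℕ → ℂ :=
  fun k => ∑ i ∈ Finset.range (k + 1), a i * b (k - i)

/-- Coefficient sequence of the constant function `1`. -/
def oneCoeff : ℕ → ℂ := fun k => if k = 0 then 1 else 0

/-- `f` is cyclic for (the shift operator on) `D_α`: there are polynomials `p n` with
`‖p n · f - 1‖_α → 0`. -/
def Cyclic (α : ℝ) (f : ℕ → ℂ) : Prop :=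
  ∃ p : ℕ → Polynomial ℂ,
    Tendsto (fun n => DNorm α (fun k => mulCoeff (p n).coeff f k - oneCoeff k)) atTop (𝓝 0)

/-- Coefficients of `S^t f`, where `S` is the shift operator `(Sf)(z) = z f(z)`. -/
def shiftPow (t : ℕ) (a : ℕ → ℂ) : ℕ → ℂ :=
  fun k => if k < t then 0 else a (k - t)

/-- Operator norm of `S^t` on `D_α`. -/
def shiftOpNorm (α : ℝ) (t : ℕ) : ℝ :=
  sSup {r : ℝ | ∃ a : ℕ → ℂ, MemD α a ∧ DNorm α a ≤ 1 ∧ r = DNorm α (shiftPow t a)}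

/-- `p` is a `d`-th optimal polynomial approximant to `1/f` in `D_α`. -/
def IsOPA (α : ℝ) (f : ℕ → ℂ) (d : ℕ) (p : Polynomial ℂ) : Prop :=
  p.natDegree ≤ d ∧
    ∀ q : Polynomial ℂ, q.natDegree ≤ d →
      DNorm α (fun k => mulCoeff p.coeff f k - oneCoeff k) ≤
        DNorm α (fun k => mulCoeff q.coeff f k - oneCoeff k)

/-- The matrix `M` of the linear system determining the `d`-th o.p.a. to `1/f`:
`m_{j,k} = ⟨S^k f, S^j f⟩_α`. -/
def opaMatrix (α : ℝ) (d : ℕ) (f : ℕ → ℂ) : Matrix (Fin (d + 1)) (Fin (d + 1)) ℂ :=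
  Matrix.of fun j k => Dinner α (shiftPow (k : ℕ) f) (shiftPow (j : ℕ) f)

/-- The vector `b` of the linear system determining the `d`-th o.p.a. to `1/f`:
`b_j = ⟨1, S^j f⟩_α`. -/
def opaVec (α : ℝ) (d : ℕ) (f : ℕ → ℂ) : Fin (d + 1) → ℂ :=
  fun j => Dinner α oneCoeff (shiftPow (j : ℕ) f)

/-- Frobenius norm of a complex matrix. -/
def frobNorm {m n : ℕ} (M : Matrix (Fin m) (Fin n) ℂ) : ℝ :=
  Real.sqrt (∑ j, ∑ k, ‖M j k‖ ^ 2)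

/-- Euclidean norm on `ℂ^m`. -/
def euclNorm {m : ℕ} (v : Fin m → ℂ) : ℝ :=
  Real.sqrt (∑ j, ‖v j‖ ^ 2)

/-- `α`-weighted Frobenius norm: the Frobenius norm of the matrix in the orthonormal
basis `{z^k/(k+1)^{α/2}}` of the map whose matrix in `{z^k}` is `M`. -/
def wFrobNorm (α : ℝ) {m : ℕ} (M : Matrix (Fin m) (Fin m) ℂ) : ℝ :=
  Real.sqrt (∑ j, ∑ k, ‖M j k‖ ^ 2 * (((j : ℕ) : ℝ) + 1) ^ α * (((k : ℕ) : ℝ) + 1) ^ (-α))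

/-- Coefficients of the reproducing kernel of `D_α` at `w ∈ 𝔻`. -/
def kern (α : ℝ) (w : ℂ) : ℕ → ℂ :=
  fun k => (starRingEnd ℂ) w ^ k / ((((k : ℝ) + 1) ^ α : ℝ) : ℂ)

/-! After the isometric embedding of `D_α` into `ℓ²` given by `a_k ↦ (k + 1)^(α/2) a_k`, the matrix
`M` is the Gram matrix of `f, S f, …, S^d f`. These vectors are linearly independent, because formal
power series have no zero divisors, so `M` is invertible, and the coefficients `c` of the optimal
polynomial approximant are the solution of the normal equations `M c = b`. As `1, S, …, S^d` are
bounded on `D_α`, the data `b` and `M` are locally Lipschitz in `f`. Finally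
`M (c' - c) = (b' - b) - (M' - M) c'` with `‖c'‖ ≤ ‖c‖ + ‖c' - c‖`, and the contribution of
`‖c' - c‖` on the right is absorbed once `‖M⁻¹‖ ‖M' - M‖ ≤ 1/2`. -/

open scoped lp Matrix

section

/-! ### Gram matrices and perturbation of linear systems -/

lemma gram_mulVec {𝕜 E ι : Type*} [RCLike 𝕜] [SeminormedAddCommGroup E] [InnerProductSpace 𝕜 E]
    [Fintype ι] (v : ι → E) (c : ι → 𝕜) (j : ι) :
    (Matrix.gram 𝕜 v *ᵥ c) j = inner 𝕜 (v j) (∑ i, c i • v i) := by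
  simp only [Matrix.mulVec, dotProduct, Matrix.gram_apply, inner_sum, inner_smul_right, mul_comm]

lemma gram_mulVec_eq_of_forall_norm_sub_le {𝕜 E ι : Type*} [RCLike 𝕜] [NormedAddCommGroup E]
    [InnerProductSpace 𝕜 E] [Fintype ι] {v : ι → E} {e : E} {c : ι → 𝕜}
    (hc : ∀ x : ι → 𝕜, ‖∑ i, c i • v i - e‖ ≤ ‖∑ i, x i • v i - e‖) :
    Matrix.gram 𝕜 v *ᵥ c = fun j => inner 𝕜 (v j) e := by
  have hmem (x : ι → 𝕜) : ∑ i, x i • v i ∈ Submodule.span 𝕜 (Set.range v) :=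
    (Submodule.mem_span_range_iff_exists_fun 𝕜).2 ⟨x, rfl⟩
  have hmin : ‖e - ∑ i, c i • v i‖ = ⨅ w : Submodule.span 𝕜 (Set.range v), ‖e - w‖ := by
    refine le_antisymm (le_ciInf fun ⟨w, hw⟩ => ?_)
      (ciInf_le ⟨0, Set.forall_mem_range.2 fun _ => norm_nonneg _⟩ (⟨_, hmem c⟩ :
        Submodule.span 𝕜 (Set.range v)))
    obtain ⟨x, rfl⟩ := (Submodule.mem_span_range_iff_exists_fun 𝕜).1 hw
    simpa only [norm_sub_rev e] using hc x
  have horth := (Submodule.norm_eq_iInf_iff_inner_eq_zero _ (hmem c)).1 hmin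
  ext j
  have hj := inner_eq_zero_symm.1 (horth (v j) (Submodule.subset_span ⟨j, rfl⟩))
  rw [gram_mulVec, ← sub_eq_zero, ← inner_sub_right, ← neg_sub, inner_neg_right, hj, neg_zero]

lemma norm_inner_sub_inner_le {𝕜 E : Type*} [RCLike 𝕜] [SeminormedAddCommGroup E]
    [InnerProductSpace 𝕜 E] (x y x' y' : E) :
    ‖inner 𝕜 x' y' - inner 𝕜 x y‖ ≤ ‖x' - x‖ * ‖y'‖ + ‖x‖ * ‖y' - y‖ := by
  have hsplit : inner 𝕜 x' y' - inner 𝕜 x y = inner 𝕜 (x' - x) y' + inner 𝕜 x (y' - y) := by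
    rw [inner_sub_left, inner_sub_right]
    ring
  rw [hsplit]
  exact (norm_add_le _ _).trans (add_le_add (norm_inner_le_norm _ _) (norm_inner_le_norm _ _))

lemma euclNorm_eq_norm_toLp {m : ℕ} (v : Fin m → ℂ) : euclNorm v = ‖WithLp.toLp 2 v‖ :=
  (EuclideanSpace.norm_eq _).symm

lemma euclNorm_nonneg {m : ℕ} (v : Fin m → ℂ) : 0 ≤ euclNorm v :=
  Real.sqrt_nonneg _

lemma euclNorm_add_le {m : ℕ} (v w : Fin m → ℂ) : euclNorm (v + w) ≤ euclNorm v + euclNorm w := by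
  simp only [euclNorm_eq_norm_toLp, WithLp.toLp_add]
  exact norm_add_le _ _

lemma euclNorm_neg {m : ℕ} (v : Fin m → ℂ) : euclNorm (-v) = euclNorm v := by
  simp only [euclNorm, Pi.neg_apply, norm_neg]

lemma frobNorm_nonneg {m n : ℕ} (M : Matrix (Fin m) (Fin n) ℂ) : 0 ≤ frobNorm M :=
  Real.sqrt_nonneg _

lemma euclNorm_mulVec_le {m n : ℕ} (M : Matrix (Fin m) (Fin n) ℂ) (v : Fin n → ℂ) :
    euclNorm (M *ᵥ v) ≤ frobNorm M * euclNorm v := by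
  rw [euclNorm, frobNorm, euclNorm, ← Real.sqrt_mul (by positivity), Finset.sum_mul]
  refine Real.sqrt_le_sqrt (Finset.sum_le_sum fun j _ => ?_)
  calc ‖∑ k, M j k * v k‖ ^ 2 ≤ (∑ k, ‖M j k‖ * ‖v k‖) ^ 2 := by
        gcongr
        simpa only [norm_mul] using norm_sum_le Finset.univ fun k => M j k * v k
    _ ≤ (∑ k, ‖M j k‖ ^ 2) * ∑ k, ‖v k‖ ^ 2 := Finset.sum_mul_sq_le_sq_mul_sq _ _ _

lemma euclNorm_le_sqrt_mul {m : ℕ} {v : Fin m → ℂ} {r : ℝ} (hr : 0 ≤ r) (hv : ∀ j, ‖v j‖ ≤ r) :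
    euclNorm v ≤ √m * r := by
  rw [euclNorm, ← Real.sqrt_sq hr, ← Real.sqrt_mul m.cast_nonneg]
  refine Real.sqrt_le_sqrt ?_
  calc ∑ j, ‖v j‖ ^ 2 ≤ ∑ _j : Fin m, r ^ 2 := by gcongr with j; exact hv j
    _ = m * r ^ 2 := by simp

lemma frobNorm_le_sqrt_mul {m n : ℕ} {M : Matrix (Fin m) (Fin n) ℂ} {r : ℝ} (hr : 0 ≤ r)
    (hM : ∀ j k, ‖M j k‖ ≤ r) : frobNorm M ≤ √(m * n) * r := by
  rw [frobNorm, ← Real.sqrt_sq hr, ← Real.sqrt_mul (by positivity)]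
  refine Real.sqrt_le_sqrt ?_
  calc ∑ j, ∑ k, ‖M j k‖ ^ 2 ≤ ∑ _j : Fin m, ∑ _k : Fin n, r ^ 2 := by
        gcongr with j _ k; exact hM j k
    _ = m * n * r ^ 2 := by simp [mul_assoc]

lemma euclNorm_sub_le_of_mulVec_eq {m n : ℕ} {M M' : Matrix (Fin m) (Fin n) ℂ}
    {N : Matrix (Fin n) (Fin m) ℂ} {b b' : Fin m → ℂ} {c c' : Fin n → ℂ} (hN : N * M = 1)
    (hM : frobNorm N * frobNorm (M' - M) ≤ 1 / 2) (hc : M *ᵥ c = b) (hc' : M' *ᵥ c' = b') :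
    euclNorm (c' - c) ≤
      2 * frobNorm N * (euclNorm (b' - b) + frobNorm (M' - M) * euclNorm c) := by
  have hsolve : c' - c = N *ᵥ ((b' - b) + -((M' - M) *ᵥ c')) := by
    have hresidual : (b' - b) + -((M' - M) *ᵥ c') = M *ᵥ (c' - c) := by
      rw [← hc, ← hc', Matrix.sub_mulVec, Matrix.mulVec_sub]
      abel
    rw [hresidual, Matrix.mulVec_mulVec, hN, Matrix.one_mulVec]
  have hle : euclNorm (c' - c) ≤
      frobNorm N * (euclNorm (b' - b) + frobNorm (M' - M) * euclNorm c') := by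
    calc euclNorm (c' - c) ≤ frobNorm N * euclNorm ((b' - b) + -((M' - M) *ᵥ c')) := by
          rw [hsolve]
          exact euclNorm_mulVec_le _ _
      _ ≤ frobNorm N * (euclNorm (b' - b) + frobNorm (M' - M) * euclNorm c') := by
          refine mul_le_mul_of_nonneg_left ((euclNorm_add_le _ _).trans ?_) (frobNorm_nonneg N)
          rw [euclNorm_neg]
          gcongr
          exact euclNorm_mulVec_le _ _
  have hc'_le : euclNorm c' ≤ euclNorm c + euclNorm (c' - c) := by
    simpa using euclNorm_add_le c (c' - c)
  have habsorb := mul_le_mul_of_nonneg_right hM (euclNorm_nonneg (c' - c))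
  have hc'_mul := mul_le_mul_of_nonneg_left hc'_le
    (mul_nonneg (frobNorm_nonneg N) (frobNorm_nonneg (M' - M)))
  linarith

variable {α : ℝ} {d : ℕ}

/-! ### `D_α` inside `ℓ²` -/

/-- The coefficient sequence `(k + 1)^(α/2) a_k`, which turns the `D_α` norm of `a` into an
`ℓ²` norm. -/
def weightedCoeff (α : ℝ) : (ℕ → ℂ) →ₗ[ℂ] (ℕ → ℂ) :=
  LinearMap.pi fun k => ((√(((k : ℝ) + 1) ^ α) : ℝ) : ℂ) • LinearMap.proj k

lemma weightedCoeff_apply (a : ℕ → ℂ) (k : ℕ) :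
    weightedCoeff α a k = (√(((k : ℝ) + 1) ^ α) : ℝ) * a k :=
  rfl

lemma norm_weightedCoeff_sq (a : ℕ → ℂ) (k : ℕ) :
    ‖weightedCoeff α a k‖ ^ 2 = ‖a k‖ ^ 2 * ((k : ℝ) + 1) ^ α := by
  rw [weightedCoeff_apply, norm_mul, mul_pow, Complex.norm_real, Real.norm_eq_abs, sq_abs,
    Real.sq_sqrt (by positivity), mul_comm]

lemma weightedCoeff_injective : Function.Injective (weightedCoeff α) := by
  intro a b hab
  ext k
  have hk : ((√(((k : ℝ) + 1) ^ α) : ℝ) : ℂ) ≠ 0 := by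
    rw [Complex.ofReal_ne_zero]
    positivity
  exact mul_left_cancel₀ hk (congrFun hab k)

lemma memD_iff_memℓp {a : ℕ → ℂ} : MemD α a ↔ Memℓp (weightedCoeff α a) 2 := by
  rw [memℓp_gen_iff (by norm_num)]
  simp only [ENNReal.toReal_ofNat, Real.rpow_ofNat, norm_weightedCoeff_sq, MemD]

/-- The Dirichlet-type space `D_α` as a space of coefficient sequences. -/
def dirichletSpace (α : ℝ) : Submodule ℂ (ℕ → ℂ) where
  carrier := {a | MemD α a}
  zero_mem' := memD_iff_memℓp.2 (by rw [map_zero]; exact zero_memℓp)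
  add_mem' ha hb := memD_iff_memℓp.2 <| by
    rw [map_add]
    exact (memD_iff_memℓp.1 ha).add (memD_iff_memℓp.1 hb)
  smul_mem' c a ha := memD_iff_memℓp.2 <| by
    rw [map_smul]
    exact (memD_iff_memℓp.1 ha).const_smul c

/-- The isometric embedding of `D_α` into `ℓ²`; it transports the norm and the inner product of
`D_α`, which are only given by formulas, to those of a Hilbert space. -/
def toL2 (α : ℝ) : dirichletSpace α →ₗ[ℂ] ℓ²(ℕ, ℂ) where
  toFun a := ⟨weightedCoeff α a, memD_iff_memℓp.1 a.2⟩
  map_add' a b := lp.ext (map_add (weightedCoeff α) (a : ℕ → ℂ) b)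
  map_smul' c a := lp.ext (map_smul (weightedCoeff α) c (a : ℕ → ℂ))

lemma toL2_injective : Function.Injective (toL2 α) := fun _ _ hab =>
  Subtype.ext (weightedCoeff_injective (congrArg Subtype.val hab))

lemma norm_toL2 (a : dirichletSpace α) : ‖toL2 α a‖ = DNorm α a := by
  rw [lp.norm_eq_tsum_rpow (by norm_num)]
  simp only [ENNReal.toReal_ofNat, Real.rpow_ofNat, ← Real.sqrt_eq_rpow]
  exact congrArg Real.sqrt (tsum_congr (norm_weightedCoeff_sq (a : ℕ → ℂ)))

lemma inner_toL2 (a b : dirichletSpace α) : inner ℂ (toL2 α a) (toL2 α b) = Dinner α b a := by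
  rw [lp.inner_eq_tsum]
  refine tsum_congr fun k => ?_
  have hw : (√(((k : ℝ) + 1) ^ α) : ℂ) * √(((k : ℝ) + 1) ^ α) = (((k : ℝ) + 1) ^ α : ℝ) := by
    rw [← Complex.ofReal_mul, Real.mul_self_sqrt (by positivity)]
  change inner ℂ (weightedCoeff α a k) (weightedCoeff α b k) = _
  rw [← hw, weightedCoeff_apply, weightedCoeff_apply, RCLike.inner_apply, map_mul,
    Complex.conj_ofReal]
  ring

lemma dnorm_nonneg (a : ℕ → ℂ) : 0 ≤ DNorm α a :=
  Real.sqrt_nonneg _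

lemma dnorm_le_add_dnorm_sub (f g : dirichletSpace α) :
    DNorm α g ≤ DNorm α f + DNorm α (g - f) := by
  rw [← AddSubgroupClass.coe_sub, ← norm_toL2, ← norm_toL2, ← norm_toL2, map_sub]
  exact norm_le_norm_add_norm_sub' _ _

lemma memD_oneCoeff : MemD α oneCoeff :=
  summable_of_ne_finset_zero (s := {0}) fun k hk => by
    simp [oneCoeff, Finset.notMem_singleton.1 hk]

lemma dnorm_oneCoeff : DNorm α oneCoeff = 1 := by
  rw [DNorm, tsum_eq_single 0 fun k hk => by simp [oneCoeff, hk]]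
  simp [oneCoeff]

/-! ### The shift operator -/

/-- A common bound for the norms of `1, S, …, S^d` on `D_α`. -/
def shiftBound (α : ℝ) (d : ℕ) : ℝ :=
  √(((d : ℝ) + 1) ^ |α|)

lemma shiftBound_nonneg : 0 ≤ shiftBound α d :=
  Real.sqrt_nonneg _

lemma shiftBound_sq : shiftBound α d ^ 2 = ((d : ℝ) + 1) ^ |α| :=
  Real.sq_sqrt (by positivity)

lemma weight_add_le {t : ℕ} (ht : t ≤ d) (k : ℕ) :
    (((k + t : ℕ) : ℝ) + 1) ^ α ≤ shiftBound α d ^ 2 * ((k : ℝ) + 1) ^ α := by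
  have htd : (t : ℝ) ≤ d := by exact_mod_cast ht
  have hk : (0 : ℝ) ≤ k := k.cast_nonneg
  have hd : (0 : ℝ) ≤ d := d.cast_nonneg
  rw [shiftBound_sq]
  push_cast
  rcases le_total 0 α with hα | hα
  · rw [abs_of_nonneg hα, ← Real.mul_rpow (by positivity) (by positivity)]
    exact Real.rpow_le_rpow (by positivity) (by nlinarith [mul_nonneg hd hk]) hα
  · calc ((k : ℝ) + t + 1) ^ α ≤ ((k : ℝ) + 1) ^ α :=
          Real.rpow_le_rpow_of_nonpos (by positivity) (by linarith [t.cast_nonneg (α := ℝ)]) hα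
      _ ≤ ((d : ℝ) + 1) ^ |α| * ((k : ℝ) + 1) ^ α :=
          le_mul_of_one_le_left (by positivity)
            (Real.one_le_rpow (by linarith) (abs_nonneg α))

lemma shiftPow_add_apply (t : ℕ) (a : ℕ → ℂ) (k : ℕ) : shiftPow t a (k + t) = a k := by
  simp [shiftPow]

lemma norm_sq_shiftPow_mul_weight_le {t : ℕ} (ht : t ≤ d) (a : ℕ → ℂ) (k : ℕ) :
    ‖shiftPow t a (k + t)‖ ^ 2 * (((k + t : ℕ) : ℝ) + 1) ^ α ≤
      shiftBound α d ^ 2 * (‖a k‖ ^ 2 * ((k : ℝ) + 1) ^ α) := by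
  rw [shiftPow_add_apply, mul_left_comm]
  exact mul_le_mul_of_nonneg_left (weight_add_le ht k) (sq_nonneg _)

lemma MemD.shiftPow {a : ℕ → ℂ} (ha : MemD α a) (t : ℕ) : MemD α (shiftPow t a) :=
  (summable_nat_add_iff t).1 <|
    .of_nonneg_of_le (fun _ => by positivity) (norm_sq_shiftPow_mul_weight_le le_rfl a)
      (ha.mul_left _)

lemma dnorm_shiftPow_le {t : ℕ} (ht : t ≤ d) {a : ℕ → ℂ} (ha : MemD α a) :
    DNorm α (shiftPow t a) ≤ shiftBound α d * DNorm α a := by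
  have hsupp : Function.support (fun k => ‖shiftPow t a k‖ ^ 2 * ((k : ℝ) + 1) ^ α) ⊆
      Set.range (· + t) := by
    intro k hk
    refine ⟨k - t, Nat.sub_add_cancel (not_lt.1 fun hkt => hk ?_)⟩
    simp [shiftPow, hkt]
  unfold DNorm
  rw [← (add_left_injective t).tsum_eq hsupp, ← Real.sqrt_sq shiftBound_nonneg,
    ← Real.sqrt_mul (sq_nonneg _), ← tsum_mul_left]
  exact Real.sqrt_le_sqrt <| Summable.tsum_le_tsum (norm_sq_shiftPow_mul_weight_le ht a)
    ((summable_nat_add_iff t).2 (ha.shiftPow t)) (ha.mul_left _)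

/-- The power `S^t` of the shift operator, on `D_α`. -/
def shiftLinearMap (α : ℝ) (t : ℕ) : dirichletSpace α →ₗ[ℂ] dirichletSpace α where
  toFun a := ⟨shiftPow t a, MemD.shiftPow a.2 t⟩
  map_add' a b := by
    ext k
    by_cases hk : k < t <;> simp [shiftPow, hk]
  map_smul' c a := by
    ext k
    by_cases hk : k < t <;> simp [shiftPow, hk]

/-- The vectors `f, S f, …, S^d f`, embedded in `ℓ²`. -/
def shiftFamily (d : ℕ) (f : dirichletSpace α) (j : Fin (d + 1)) : ℓ²(ℕ, ℂ) :=
  toL2 α (shiftLinearMap α j f)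

lemma norm_shiftFamily_le (f : dirichletSpace α) (j : Fin (d + 1)) :
    ‖shiftFamily d f j‖ ≤ shiftBound α d * DNorm α f := by
  rw [shiftFamily, norm_toL2]
  exact dnorm_shiftPow_le j.is_le f.2

lemma norm_shiftFamily_sub_le (f g : dirichletSpace α) (j : Fin (d + 1)) :
    ‖shiftFamily d g j - shiftFamily d f j‖ ≤ shiftBound α d * DNorm α (g - f) := by
  rw [shiftFamily, shiftFamily, ← map_sub, ← map_sub]
  exact norm_shiftFamily_le (g - f) j

lemma opaMatrix_eq_gram (f : dirichletSpace α) :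
    opaMatrix α d f = Matrix.gram ℂ (shiftFamily d f) := by
  ext j k
  exact (inner_toL2 (shiftLinearMap α j f) (shiftLinearMap α k f)).symm

lemma opaVec_eq_inner (f : dirichletSpace α) (j : Fin (d + 1)) :
    opaVec α d f j = inner ℂ (shiftFamily d f j) (toL2 α ⟨oneCoeff, memD_oneCoeff⟩) :=
  (inner_toL2 (shiftLinearMap α j f) ⟨oneCoeff, memD_oneCoeff⟩).symm

/-! ### Normal equations -/

lemma mk_mulCoeff (a b : ℕ → ℂ) :
    PowerSeries.mk (mulCoeff a b) = PowerSeries.mk a * PowerSeries.mk b := by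
  ext k
  simp [PowerSeries.coeff_mul, Finset.Nat.sum_antidiagonal_eq_sum_range_succ_mk, mulCoeff]

lemma mk_shiftPow (t : ℕ) (a : ℕ → ℂ) :
    PowerSeries.mk (shiftPow t a) = PowerSeries.X ^ t * PowerSeries.mk a := by
  ext k
  by_cases hk : k < t
  · simp [PowerSeries.coeff_X_pow_mul', shiftPow, hk, hk.not_ge]
  · simp [PowerSeries.coeff_X_pow_mul', shiftPow, hk, not_lt.1 hk]

lemma mulCoeff_coeff_eq_sum {q : Polynomial ℂ} (hq : q.natDegree ≤ d) (f : ℕ → ℂ) :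
    mulCoeff q.coeff f = ∑ i : Fin (d + 1), q.coeff i • shiftPow i f := by
  have hq_sum : PowerSeries.mk q.coeff =
      ∑ i : Fin (d + 1), PowerSeries.C (q.coeff i) * PowerSeries.X ^ (i : ℕ) := by
    ext k
    simp only [PowerSeries.coeff_mk, map_sum, PowerSeries.coeff_C_mul_X_pow]
    rw [Fin.sum_univ_eq_sum_range (fun i => if k = i then q.coeff i else 0), Finset.sum_ite_eq]
    split_ifs with hk
    · rfl
    · exact Polynomial.coeff_eq_zero_of_natDegree_lt (by grind)
  ext k
  calc mulCoeff q.coeff f k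
      = PowerSeries.coeff k (PowerSeries.mk q.coeff * PowerSeries.mk f) := by
        rw [← mk_mulCoeff, PowerSeries.coeff_mk]
    _ = PowerSeries.coeff k
          (∑ i : Fin (d + 1), PowerSeries.C (q.coeff i) * PowerSeries.mk (shiftPow i f)) := by
        simp only [hq_sum, Finset.sum_mul, mul_assoc, mk_shiftPow]
    _ = (∑ i : Fin (d + 1), q.coeff i • shiftPow i f) k := by
        simp only [map_sum, PowerSeries.coeff_C_mul, PowerSeries.coeff_mk, Finset.sum_apply,
          Pi.smul_apply, smul_eq_mul]

lemma mulCoeff_ne_zero {a b : ℕ → ℂ} (ha : a ≠ 0) (hb : b ≠ 0) : mulCoeff a b ≠ 0 := by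
  have hmk {c : ℕ → ℂ} : PowerSeries.mk c = 0 ↔ c = 0 := by
    simp [PowerSeries.ext_iff, funext_iff]
  rw [Ne, ← hmk, mk_mulCoeff]
  exact mul_ne_zero (hmk.not.2 ha) (hmk.not.2 hb)

lemma exists_polynomial_coeff_eq (c : Fin (d + 1) → ℂ) :
    ∃ q : Polynomial ℂ, q.natDegree ≤ d ∧ ∀ i : Fin (d + 1), q.coeff i = c i :=
  ⟨Polynomial.ofFn (d + 1) c,
    Nat.lt_succ_iff.1 (Polynomial.ofFn_natDegree_lt d.succ_pos c),
    fun i => Polynomial.ofFn_coeff_eq_val_of_lt c i.2⟩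

lemma linearIndependent_shiftPow {f : ℕ → ℂ} (hf : f ≠ 0) :
    LinearIndependent ℂ fun i : Fin (d + 1) => shiftPow i f := by
  rw [Fintype.linearIndependent_iff]
  intro c hc i
  obtain ⟨q, hq, hqc⟩ := exists_polynomial_coeff_eq c
  simp only [← hqc, ← mulCoeff_coeff_eq_sum hq] at hc
  rw [← hqc i, not_ne_iff.1 fun hq0 => mulCoeff_ne_zero hq0 hf hc, Pi.zero_apply]

lemma linearIndependent_shiftFamily {f : dirichletSpace α} (hf : f ≠ 0) :
    LinearIndependent ℂ (shiftFamily d f) := by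
  have hsub : LinearIndependent ℂ fun i : Fin (d + 1) => shiftLinearMap α i f :=
    .of_comp (dirichletSpace α).subtype (linearIndependent_shiftPow (by simpa using hf))
  exact hsub.map' (toL2 α) (LinearMap.ker_eq_bot.2 toL2_injective)

lemma det_opaMatrix_ne_zero {f : dirichletSpace α} (hf : f ≠ 0) : (opaMatrix α d f).det ≠ 0 := by
  rw [opaMatrix_eq_gram]
  exact Matrix.det_gram_ne_zero_iff_linearIndependent.2 (linearIndependent_shiftFamily hf)

lemma dnorm_mulCoeff_sub_oneCoeff (f : dirichletSpace α) {q : Polynomial ℂ}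
    (hq : q.natDegree ≤ d) :
    DNorm α (fun k => mulCoeff q.coeff f k - oneCoeff k) =
      ‖∑ i : Fin (d + 1), q.coeff i • shiftFamily d f i - toL2 α ⟨oneCoeff, memD_oneCoeff⟩‖ := by
  simp only [shiftFamily, ← map_smul, ← map_sum, ← map_sub, norm_toL2]
  congr 1
  ext k
  simp [mulCoeff_coeff_eq_sum hq, shiftLinearMap]

lemma IsOPA.opaMatrix_mulVec {f : dirichletSpace α} {p : Polynomial ℂ} (hp : IsOPA α f d p) :
    opaMatrix α d f *ᵥ (fun i => p.coeff i) = opaVec α d f := by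
  rw [opaMatrix_eq_gram, funext (opaVec_eq_inner f)]
  refine gram_mulVec_eq_of_forall_norm_sub_le fun x => ?_
  obtain ⟨q, hq, hqx⟩ := exists_polynomial_coeff_eq x
  simp only [← hqx, ← dnorm_mulCoeff_sub_oneCoeff f hq, ← dnorm_mulCoeff_sub_oneCoeff f hp.1]
  exact hp.2 q hq

/-! ### Lipschitz bounds -/

lemma dnorm_coeff_le {q : Polynomial ℂ} (hq : q.natDegree ≤ d) :
    DNorm α q.coeff ≤ shiftBound α d * euclNorm fun i : Fin (d + 1) => q.coeff i := by
  have hsum : ∑' k, ‖q.coeff k‖ ^ 2 * ((k : ℝ) + 1) ^ α =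
      ∑ i : Fin (d + 1), ‖q.coeff i‖ ^ 2 * ((i : ℝ) + 1) ^ α := by
    rw [Fin.sum_univ_eq_sum_range fun k : ℕ => ‖q.coeff k‖ ^ 2 * ((k : ℝ) + 1) ^ α]
    refine tsum_eq_sum fun k hk => ?_
    rw [Polynomial.coeff_eq_zero_of_natDegree_lt (by grind)]
    simp
  rw [DNorm, hsum, euclNorm, ← Real.sqrt_sq shiftBound_nonneg, ← Real.sqrt_mul (sq_nonneg _),
    Finset.mul_sum]
  refine Real.sqrt_le_sqrt (Finset.sum_le_sum fun i _ => ?_)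
  rw [mul_comm]
  gcongr
  simpa using weight_add_le (α := α) i.is_le 0

lemma euclNorm_opaVec_sub_le (f g : dirichletSpace α) :
    euclNorm (opaVec α d g - opaVec α d f) ≤
      √(d + 1) * shiftBound α d * DNorm α (g - f) := by
  have hentry (j : Fin (d + 1)) :
      ‖(opaVec α d g - opaVec α d f) j‖ ≤ shiftBound α d * DNorm α (g - f) := by
    rw [Pi.sub_apply, opaVec_eq_inner, opaVec_eq_inner, ← inner_sub_left]
    refine (norm_inner_le_norm _ _).trans ?_
    rw [norm_toL2, dnorm_oneCoeff, mul_one]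
    exact norm_shiftFamily_sub_le f g j
  simpa [mul_assoc] using
    euclNorm_le_sqrt_mul (mul_nonneg shiftBound_nonneg (dnorm_nonneg _)) hentry

lemma frobNorm_opaMatrix_sub_le (f g : dirichletSpace α) :
    frobNorm (opaMatrix α d g - opaMatrix α d f) ≤
      (d + 1) * shiftBound α d ^ 2 * (DNorm α f + DNorm α g) * DNorm α (g - f) := by
  have hentry (j k : Fin (d + 1)) : ‖(opaMatrix α d g - opaMatrix α d f) j k‖ ≤
      shiftBound α d ^ 2 * (DNorm α f + DNorm α g) * DNorm α (g - f) := by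
    rw [opaMatrix_eq_gram, opaMatrix_eq_gram]
    calc ‖inner ℂ (shiftFamily d g j) (shiftFamily d g k) -
            inner ℂ (shiftFamily d f j) (shiftFamily d f k)‖
        ≤ ‖shiftFamily d g j - shiftFamily d f j‖ * ‖shiftFamily d g k‖ +
            ‖shiftFamily d f j‖ * ‖shiftFamily d g k - shiftFamily d f k‖ :=
          norm_inner_sub_inner_le _ _ _ _
      _ ≤ shiftBound α d * DNorm α (g - f) * (shiftBound α d * DNorm α g) +
            shiftBound α d * DNorm α f * (shiftBound α d * DNorm α (g - f)) :=
          add_le_add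
            (mul_le_mul (norm_shiftFamily_sub_le f g j) (norm_shiftFamily_le g k) (norm_nonneg _)
              (mul_nonneg shiftBound_nonneg (dnorm_nonneg _)))
            (mul_le_mul (norm_shiftFamily_le f j) (norm_shiftFamily_sub_le f g k) (norm_nonneg _)
              (mul_nonneg shiftBound_nonneg (dnorm_nonneg _)))
      _ = shiftBound α d ^ 2 * (DNorm α f + DNorm α g) * DNorm α (g - f) := by ring
  have hfrob := frobNorm_le_sqrt_mul ((norm_nonneg _).trans (hentry 0 0)) hentry
  rw [Real.sqrt_mul_self (Nat.cast_nonneg _)] at hfrob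
  simpa only [Nat.cast_add, Nat.cast_one, mul_assoc] using hfrob

lemma exists_frobNorm_opaMatrix_sub_le (d : ℕ) (f : dirichletSpace α) :
    ∃ A ≥ 0, ∀ g : dirichletSpace α, DNorm α (g - f) ≤ 1 →
      frobNorm (opaMatrix α d g - opaMatrix α d f) ≤ A * DNorm α (g - f) := by
  have hf := dnorm_nonneg (α := α) f
  refine ⟨(d + 1) * shiftBound α d ^ 2 * (2 * DNorm α f + 1), by positivity, fun g hg => ?_⟩
  have hfg : DNorm α f + DNorm α g ≤ 2 * DNorm α f + 1 := by
    linarith [dnorm_le_add_dnorm_sub f g]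
  refine (frobNorm_opaMatrix_sub_le f g).trans ?_
  gcongr
  exact dnorm_nonneg _

lemma IsOPA.dnorm_sub_le {f g : dirichletSpace α} (hf : f ≠ 0) {p q : Polynomial ℂ}
    (hp : IsOPA α f d p) (hq : IsOPA α g d q)
    (hM : frobNorm (opaMatrix α d f)⁻¹ * frobNorm (opaMatrix α d g - opaMatrix α d f) ≤ 1 / 2) :
    DNorm α (q.coeff - p.coeff) ≤ shiftBound α d * (2 * frobNorm (opaMatrix α d f)⁻¹ *
      (euclNorm (opaVec α d g - opaVec α d f) +
        frobNorm (opaMatrix α d g - opaMatrix α d f) *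
          euclNorm fun i : Fin (d + 1) => p.coeff i)) := by
  have hdeg : (q - p).natDegree ≤ d :=
    (Polynomial.natDegree_sub_le q p).trans (max_le hq.1 hp.1)
  have hinv : (opaMatrix α d f)⁻¹ * opaMatrix α d f = 1 :=
    Matrix.nonsing_inv_mul _ (det_opaMatrix_ne_zero hf).isUnit
  have hcoeff : q.coeff - p.coeff = (q - p).coeff :=
    funext fun k => (Polynomial.coeff_sub q p k).symm
  rw [hcoeff]
  refine (dnorm_coeff_le hdeg).trans (mul_le_mul_of_nonneg_left ?_ shiftBound_nonneg)
  simp only [Polynomial.coeff_sub]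
  exact euclNorm_sub_le_of_mulVec_eq hinv hM hp.opaMatrix_mulVec hq.opaMatrix_mulVec

lemma IsOPA.exists_dnorm_sub_le {f : dirichletSpace α} (hf : f ≠ 0) {p : Polynomial ℂ}
    (hp : IsOPA α f d p) :
    ∃ C, ∃ δ > 0, ∀ (g : dirichletSpace α) (q : Polynomial ℂ), IsOPA α g d q →
      DNorm α (g - f) ≤ δ → DNorm α (q.coeff - p.coeff) ≤ C * DNorm α (g - f) := by
  obtain ⟨A, hA, hM⟩ := exists_frobNorm_opaMatrix_sub_le d f
  set K := shiftBound α d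
  set μ := frobNorm (opaMatrix α d f)⁻¹
  set c := euclNorm fun i : Fin (d + 1) => p.coeff i
  have hμ : 0 ≤ μ := frobNorm_nonneg _
  have hc : 0 ≤ c := euclNorm_nonneg _
  have hK : 0 ≤ K := shiftBound_nonneg
  refine ⟨K * (2 * μ * (√(d + 1) * K + A * c)), min 1 (1 / (2 * (μ * A + 1))), by positivity,
    fun g q hq hg => ?_⟩
  set ε := DNorm α (g - f)
  have hε : 0 ≤ ε := dnorm_nonneg _
  have hMg := hM g (hg.trans (min_le_left _ _))
  have hsmall : μ * frobNorm (opaMatrix α d g - opaMatrix α d f) ≤ 1 / 2 := by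
    have hεA := (le_div_iff₀ (by positivity)).1 (hg.trans (min_le_right _ _))
    nlinarith [mul_le_mul_of_nonneg_left hMg hμ]
  calc DNorm α (q.coeff - p.coeff)
      ≤ K * (2 * μ * (euclNorm (opaVec α d g - opaVec α d f) +
          frobNorm (opaMatrix α d g - opaMatrix α d f) * c)) := hp.dnorm_sub_le hf hq hsmall
    _ ≤ K * (2 * μ * (√(d + 1) * K * ε + A * ε * c)) := by
        gcongr
        exact euclNorm_opaVec_sub_le f g
    _ = K * (2 * μ * (√(d + 1) * K + A * c)) * ε := by ring

theorem IsOPA.exists_lipschitz_bound {f : dirichletSpace α} (hf : f ≠ 0) {p : Polynomial ℂ}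
    (hp : IsOPA α f d p) :
    ∃ C > 0, ∃ δ > 0, ∀ (g : dirichletSpace α) (q : Polynomial ℂ), IsOPA α g d q →
      DNorm α (g - f) ≤ δ →
        euclNorm (opaVec α d g - opaVec α d f) ≤ C * DNorm α (g - f) ∧
        frobNorm (opaMatrix α d g - opaMatrix α d f) ≤ C * DNorm α (g - f) ∧
        DNorm α (q.coeff - p.coeff) ≤ C * DNorm α (g - f) := by
  obtain ⟨A, -, hM⟩ := exists_frobNorm_opaMatrix_sub_le d f
  obtain ⟨L, δ, hδ, hL⟩ := hp.exists_dnorm_sub_le hf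
  set B := √(d + 1) * shiftBound α d
  have hmono {C x : ℝ} (g : dirichletSpace α) (hC : C ≤ max 1 (max B (max A L)))
      (hx : x ≤ C * DNorm α (g - f)) : x ≤ max 1 (max B (max A L)) * DNorm α (g - f) :=
    hx.trans (mul_le_mul_of_nonneg_right hC (dnorm_nonneg _))
  refine ⟨max 1 (max B (max A L)), by positivity, min 1 δ, by positivity,
    fun g q hq hg => ⟨hmono (C := B) g (by simp) (euclNorm_opaVec_sub_le f g),
      hmono g (by simp) (hM g (hg.trans (min_le_left _ _))),
      hmono g (by simp) (hL g q hq (hg.trans (min_le_right _ _)))⟩⟩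

end

/-- If `f_n → f` in `D_α` (all nonzero), then `b_n → b`, `M_n → M` and `p_{d,n} → p_d`,
each at a rate `C(d,α,f) ‖f_n - f‖_α`. -/
theorem opa_convergence (α : ℝ) (d : ℕ) (f : ℕ → ℂ) (fn : ℕ → ℕ → ℂ)
    (hf : MemD α f) (hf0 : f ≠ 0)
    (hfn : ∀ n, MemD α (fn n)) (hfn0 : ∀ n, fn n ≠ 0)
    (hconv : Tendsto (fun n => DNorm α (fun k => fn n k - f k)) atTop (𝓝 0))
    (p : Polynomial ℂ) (hp : IsOPA α f d p)
    (P : ℕ → Polynomial ℂ) (hP : ∀ n, IsOPA α (fn n) d (P n)) :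
    Tendsto (fun n => euclNorm (fun j : Fin (d + 1) =>
      opaVec α d (fn n) j - opaVec α d f j)) atTop (𝓝 0) ∧
    Tendsto (fun n => frobNorm (opaMatrix α d (fn n) - opaMatrix α d f)) atTop (𝓝 0) ∧
    Tendsto (fun n => DNorm α (fun k => (P n).coeff k - p.coeff k)) atTop (𝓝 0) ∧
    ∃ C : ℝ, 0 < C ∧ ∃ N : ℕ, ∀ n ≥ N,
      euclNorm (fun j : Fin (d + 1) => opaVec α d (fn n) j - opaVec α d f j) ≤
        C * DNorm α (fun k => fn n k - f k) ∧
      frobNorm (opaMatrix α d (fn n) - opaMatrix α d f) ≤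
        C * DNorm α (fun k => fn n k - f k) ∧
      DNorm α (fun k => (P n).coeff k - p.coeff k) ≤
        C * DNorm α (fun k => fn n k - f k) := by
  obtain ⟨C, hC, δ, hδ, hlip⟩ :=
    IsOPA.exists_lipschitz_bound (f := ⟨f, hf⟩) (fun h => hf0 (congrArg Subtype.val h)) hp
  obtain ⟨N, hN⟩ := eventually_atTop.1 (hconv.eventually_le_const hδ)
  have hbound (n : ℕ) (hn : N ≤ n) := hlip ⟨fn n, hfn n⟩ (P n) (hP n) (hN n hn)
  have hlim {u : ℕ → ℝ} (hu : ∀ n, 0 ≤ u n)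
      (hle : ∀ n ≥ N, u n ≤ C * DNorm α (fun k => fn n k - f k)) : Tendsto u atTop (𝓝 0) :=
    squeeze_zero' (.of_forall hu) (eventually_atTop.2 ⟨N, hle⟩) (by simpa using hconv.const_mul C)
  exact ⟨hlim (fun _ => euclNorm_nonneg _) fun n hn => (hbound n hn).1,
    hlim (fun _ => frobNorm_nonneg _) fun n hn => (hbound n hn).2.1,
    hlim (fun _ => dnorm_nonneg _) fun n hn => (hbound n hn).2.2, C, hC, N, hbound⟩
end
end

section
/- For every α ∈ ℝ there exists a sequence {g_n} ⊂ D_α with ‖g_n‖_α = 1 for all n such that, setting M_n to be the 2×2 matrix with rows (1, ⟨g_n, S g_n⟩_α) and (⟨S g_n, g_n⟩_α, ‖S g_n‖_α²), each M_n is invertible and the Frobenius norm ‖M_n^{−1}‖_F tends to ∞ as n → ∞. -/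
open Filter Topology

noncomputable section

/-- The `2×2` matrix of the linear system determining the degree-1 o.p.a. to `1/g`. -/
def opaMat2 (α : ℝ) (g : ℕ → ℂ) : Matrix (Fin 2) (Fin 2) ℂ :=
  !![1, Dinner α g (shiftPow 1 g);
     Dinner α (shiftPow 1 g) g, ((DNorm α (shiftPow 1 g) ^ 2 : ℝ) : ℂ)]

/-!
If `det A_n → 0` through nonzero values, then `|det A_n⁻¹| → ∞`, which forces `‖A_n⁻¹‖_F → ∞`
because a determinant is bounded by a power of the Frobenius norm. Now
`det M_n = ‖S g_n‖² - |⟨g_n, S g_n⟩|²` is the Cauchy–Schwarz defect of the pair `g_n, S g_n`, so one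
needs unit vectors that are almost, but not exactly, eigenvectors of the shift. Normalized blocks
`z^n + ⋯ + z^(2n)` work: shifting such a block only changes its two end terms, and over a dyadic
range all weights `(k + 1)^α` are comparable, so each end term carries a fraction `O(1/n)` of the
squared norm.
-/

theorem norm_apply_le_frobNorm {m n : ℕ} (M : Matrix (Fin m) (Fin n) ℂ) (i : Fin m) (j : Fin n) :
    ‖M i j‖ ≤ frobNorm M := by
  refine Real.le_sqrt_of_sq_le ?_
  calc ‖M i j‖ ^ 2 ≤ ∑ k, ‖M i k‖ ^ 2 :=
        Finset.single_le_sum (f := fun k => ‖M i k‖ ^ 2) (fun _ _ => sq_nonneg _)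
          (Finset.mem_univ j)
    _ ≤ ∑ l, ∑ k, ‖M l k‖ ^ 2 :=
        Finset.single_le_sum (f := fun l => ∑ k, ‖M l k‖ ^ 2)
          (fun _ _ => Finset.sum_nonneg fun _ _ => sq_nonneg _) (Finset.mem_univ i)

theorem norm_det_le_factorial_mul_frobNorm_pow {m : ℕ} (M : Matrix (Fin m) (Fin m) ℂ) :
    ‖M.det‖ ≤ m.factorial * frobNorm M ^ m := by
  have h : ‖M.det‖ ≤ (Fintype.card (Fin m)).factorial • frobNorm M ^ Fintype.card (Fin m) :=
    Matrix.det_le (abv := NormedField.toAbsoluteValue ℂ) (norm_apply_le_frobNorm M)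
  rwa [Fintype.card_fin, nsmul_eq_mul] at h

theorem tendsto_frobNorm_inv_atTop {ι : Type*} {l : Filter ι} {m : ℕ}
    {A : ι → Matrix (Fin m) (Fin m) ℂ} (hA : Tendsto (fun i => (A i).det) l (𝓝[≠] 0)) :
    Tendsto (fun i => frobNorm (A i)⁻¹) l atTop := by
  have hdet : Tendsto (fun i => ‖(A i)⁻¹.det‖) l atTop := by
    simp only [Matrix.det_nonsing_inv, Ring.inverse_eq_inv']
    exact tendsto_norm_inv_nhdsNE_zero_atTop.comp hA
  refine tendsto_atTop.2 fun b => ?_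
  filter_upwards [hdet.eventually_gt_atTop (m.factorial * |b| ^ m)] with i hi
  have hpow : |b| ^ m < frobNorm (A i)⁻¹ ^ m :=
    lt_of_mul_lt_mul_left (hi.trans_le (norm_det_le_factorial_mul_frobNorm_pow _))
      (Nat.cast_nonneg _)
  exact (le_abs_self b).trans (lt_of_pow_lt_pow_left₀ m (Real.sqrt_nonneg _) hpow).le

theorem memD_of_finite_support {a : ℕ → ℂ} (α : ℝ) (ha : a.support.Finite) : MemD α a :=
  summable_of_hasFiniteSupport <| ha.subset fun k hk h0 => hk <| by simp [h0]

theorem dinner_self (α : ℝ) (a : ℕ → ℂ) : Dinner α a a = (DNorm α a ^ 2 : ℝ) := by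
  rw [DNorm, Real.sq_sqrt (tsum_nonneg fun k => by positivity), Complex.ofReal_tsum, Dinner]
  simp only [Complex.mul_conj', Complex.ofReal_mul, Complex.ofReal_pow]

theorem conj_dinner (α : ℝ) (a b : ℕ → ℂ) : (starRingEnd ℂ) (Dinner α a b) = Dinner α b a := by
  simp only [Dinner, Complex.conj_tsum, map_mul, Complex.conj_conj, Complex.conj_ofReal,
    mul_comm ((starRingEnd ℂ) (a _))]

theorem det_opaMat2 (α : ℝ) (g : ℕ → ℂ) :
    (opaMat2 α g).det = (DNorm α (shiftPow 1 g) ^ 2 - ‖Dinner α g (shiftPow 1 g)‖ ^ 2 : ℝ) := by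
  rw [opaMat2, Matrix.det_fin_two_of, one_mul, ← conj_dinner α g, Complex.mul_conj']
  push_cast
  rfl

/-- The total weight of a set of exponents, i.e. the squared `D_α`-norm of `∑ k ∈ s, z ^ k`. -/
def weightSum (α : ℝ) (s : Finset ℕ) : ℝ :=
  ∑ k ∈ s, ((k : ℝ) + 1) ^ α

theorem weightSum_nonneg (α : ℝ) (s : Finset ℕ) : 0 ≤ weightSum α s :=
  Finset.sum_nonneg fun _ _ => by positivity

theorem weightSum_pos (α : ℝ) {s : Finset ℕ} (hs : s.Nonempty) : 0 < weightSum α s :=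
  Finset.sum_pos (fun _ _ => by positivity) hs

theorem weightSum_Ico_succ_left (α : ℝ) {p q : ℕ} (hpq : p < q) :
    weightSum α (Finset.Ico (p + 1) q) = weightSum α (Finset.Ico p q) - ((p : ℝ) + 1) ^ α :=
  eq_sub_of_add_eq' (Finset.sum_eq_sum_Ico_succ_bot hpq fun k : ℕ => ((k : ℝ) + 1) ^ α).symm

theorem weightSum_Ico_succ_right (α : ℝ) {p q : ℕ} (hpq : p ≤ q) :
    weightSum α (Finset.Ico p (q + 1)) = weightSum α (Finset.Ico p q) + ((q : ℝ) + 1) ^ α :=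
  Finset.sum_Ico_succ_top hpq _

theorem rpow_le_rpow_abs_mul_rpow {c t u : ℝ} (α : ℝ) (ht : 0 < t) (hu : 0 < u)
    (htu : t ≤ c * u) (hut : u ≤ c * t) : t ^ α ≤ c ^ |α| * u ^ α := by
  have hc : 0 < c := pos_of_mul_pos_left (ht.trans_le htu) hu.le
  rcases le_total 0 α with hα | hα
  · rw [abs_of_nonneg hα, ← Real.mul_rpow hc.le hu.le]
    exact Real.rpow_le_rpow ht.le htu hα
  · rw [abs_of_nonpos hα, Real.rpow_neg hc.le, ← Real.inv_rpow hc.le,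
      ← Real.mul_rpow (inv_nonneg.2 hc.le) hu.le]
    exact Real.rpow_le_rpow_of_nonpos (by positivity) ((inv_mul_le_iff₀ hc).2 hut) hα

theorem card_mul_rpow_le_weightSum {c : ℝ} {j : ℕ} {s : Finset ℕ} (α : ℝ)
    (hj : ∀ k ∈ s, (j : ℝ) + 1 ≤ c * (k + 1)) (hs : ∀ k ∈ s, (k : ℝ) + 1 ≤ c * (j + 1)) :
    s.card * ((j : ℝ) + 1) ^ α ≤ c ^ |α| * weightSum α s := by
  rw [weightSum, Finset.mul_sum, ← nsmul_eq_mul]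
  exact Finset.card_nsmul_le_sum _ _ _ fun k hk =>
    rpow_le_rpow_abs_mul_rpow α (by positivity) (by positivity) (hj k hk) (hs k hk)

theorem rpow_div_weightSum_dyadic_le (α : ℝ) {n j : ℕ} (hnj : n ≤ j) (hjn : j ≤ 2 * n + 1) :
    ((j : ℝ) + 1) ^ α / weightSum α (Finset.Ico n (2 * n + 1)) ≤ 2 ^ |α| / ((n : ℝ) + 1) := by
  have hcard : ((Finset.Ico n (2 * n + 1)).card : ℝ) = n + 1 := by
    rw [Nat.card_Ico, show 2 * n + 1 - n = n + 1 by omega, Nat.cast_add_one]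
  rw [div_le_div_iff₀ (weightSum_pos α (Finset.nonempty_Ico.2 (by omega))) (by positivity),
    mul_comm, ← hcard]
  refine card_mul_rpow_le_weightSum α (fun k hk => ?_) fun k hk => ?_ <;>
  · rw [Finset.mem_Ico] at hk
    norm_cast
    omega

theorem tendsto_rpow_div_weightSum_dyadic (α : ℝ) {j : ℕ → ℕ} (hj : ∀ n, n ≤ j n)
    (hj' : ∀ n, j n ≤ 2 * n + 1) :
    Tendsto (fun n => ((j n : ℝ) + 1) ^ α / weightSum α (Finset.Ico n (2 * n + 1))) atTop
      (𝓝 0) :=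
  squeeze_zero
    (fun n => div_nonneg (by positivity) (weightSum_nonneg α _))
    (fun n => rpow_div_weightSum_dyadic_le α (hj n) (hj' n))
    (tendsto_const_nhds.div_atTop
      (tendsto_atTop_add_const_right _ _ tendsto_natCast_atTop_atTop))

theorem dinner_indicator (α : ℝ) (s t : Finset ℕ) (c d : ℂ) :
    Dinner α ((s : Set ℕ).indicator fun _ => c) ((t : Set ℕ).indicator fun _ => d) =
      c * (starRingEnd ℂ) d * weightSum α (s ∩ t) := by
  rw [Dinner, tsum_eq_sum (s := s ∩ t), weightSum, Complex.ofReal_sum, Finset.mul_sum]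
  · refine Finset.sum_congr rfl fun k hk => ?_
    obtain ⟨hs, ht⟩ := Finset.mem_inter.1 hk
    simp [hs, ht]
  · intro k hk
    by_cases hs : k ∈ s <;> simp_all

theorem shiftPow_zero (a : ℕ → ℂ) : shiftPow 0 a = a := rfl

theorem shiftPow_indicator_Ico (t p q : ℕ) (c : ℂ) :
    shiftPow t ((Finset.Ico p q : Set ℕ).indicator fun _ => c) =
      (Finset.Ico (p + t) (q + t) : Set ℕ).indicator fun _ => c := by
  ext k
  simp only [shiftPow, Set.indicator_apply, Finset.coe_Ico, Set.mem_Ico]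
  grind

/-- The unit vector of `D_α` with positive coefficients proportional to
`z ^ p + ⋯ + z ^ (q - 1)`; for `q ≤ p` it is `0`. -/
def unitBlock (α : ℝ) (p q : ℕ) : ℕ → ℂ :=
  (Finset.Ico p q : Set ℕ).indicator fun _ => ((√(weightSum α (Finset.Ico p q)))⁻¹ : ℝ)

theorem memD_unitBlock (α : ℝ) (p q : ℕ) : MemD α (unitBlock α p q) :=
  memD_of_finite_support α ((Finset.Ico p q).finite_toSet.subset Set.support_indicator_subset)

theorem dinner_shiftPow_unitBlock (α : ℝ) (p q s t : ℕ) :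
    Dinner α (shiftPow s (unitBlock α p q)) (shiftPow t (unitBlock α p q)) =
      (weightSum α (Finset.Ico (p + s) (q + s) ∩ Finset.Ico (p + t) (q + t)) /
        weightSum α (Finset.Ico p q) : ℝ) := by
  have hsq : (√(weightSum α (Finset.Ico p q)))⁻¹ * (√(weightSum α (Finset.Ico p q)))⁻¹ =
      (weightSum α (Finset.Ico p q))⁻¹ := by
    rw [← mul_inv, Real.mul_self_sqrt (weightSum_nonneg α _)]
  rw [unitBlock, shiftPow_indicator_Ico, shiftPow_indicator_Ico, dinner_indicator,
    Complex.conj_ofReal, ← Complex.ofReal_mul, ← Complex.ofReal_mul, hsq, inv_mul_eq_div]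

theorem dnorm_sq_shiftPow_unitBlock (α : ℝ) (p q t : ℕ) :
    DNorm α (shiftPow t (unitBlock α p q)) ^ 2 =
      weightSum α (Finset.Ico (p + t) (q + t)) / weightSum α (Finset.Ico p q) := by
  have h := dinner_shiftPow_unitBlock α p q t t
  rw [dinner_self, Finset.inter_self] at h
  exact Complex.ofReal_injective h

theorem dnorm_unitBlock (α : ℝ) {p q : ℕ} (hpq : p < q) : DNorm α (unitBlock α p q) = 1 := by
  have hW : weightSum α (Finset.Ico p q) ≠ 0 := (weightSum_pos α (Finset.nonempty_Ico.2 hpq)).ne'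
  have hsq : DNorm α (unitBlock α p q) ^ 2 = 1 := by
    simpa only [shiftPow_zero, add_zero, div_self hW] using dnorm_sq_shiftPow_unitBlock α p q 0
  exact (pow_eq_one_iff_of_nonneg (Real.sqrt_nonneg _) two_ne_zero).1 hsq

theorem det_opaMat2_unitBlock (α : ℝ) {p q : ℕ} (hpq : p < q) :
    (opaMat2 α (unitBlock α p q)).det =
      (((p : ℝ) + 1) ^ α / weightSum α (Finset.Ico p q) *
          (1 - ((p : ℝ) + 1) ^ α / weightSum α (Finset.Ico p q)) +
        ((q : ℝ) + 1) ^ α / weightSum α (Finset.Ico p q) : ℝ) := by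
  have hW : weightSum α (Finset.Ico p q) ≠ 0 := (weightSum_pos α (Finset.nonempty_Ico.2 hpq)).ne'
  have hoverlap : Finset.Ico p q ∩ Finset.Ico (p + 1) (q + 1) = Finset.Ico (p + 1) q := by
    rw [Finset.Ico_inter_Ico, max_eq_right p.le_succ, min_eq_left q.le_succ]
  have hinner : Dinner α (unitBlock α p q) (shiftPow 1 (unitBlock α p q)) =
      (weightSum α (Finset.Ico (p + 1) q) / weightSum α (Finset.Ico p q) : ℝ) := by
    simpa only [shiftPow_zero, add_zero, hoverlap] using dinner_shiftPow_unitBlock α p q 0 1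
  rw [det_opaMat2, hinner, Complex.norm_real, Real.norm_eq_abs, sq_abs,
    dnorm_sq_shiftPow_unitBlock, weightSum_Ico_succ_right α hpq, weightSum_Ico_succ_left α hpq]
  congr 1
  field_simp
  ring

theorem det_opaMat2_unitBlock_ne_zero (α : ℝ) {p q : ℕ} (hpq : p < q) :
    (opaMat2 α (unitBlock α p q)).det ≠ 0 := by
  have hW : 0 < weightSum α (Finset.Ico p q) := weightSum_pos α (Finset.nonempty_Ico.2 hpq)
  have hp : ((p : ℝ) + 1) ^ α / weightSum α (Finset.Ico p q) ≤ 1 :=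
    (div_le_one hW).2 <| Finset.single_le_sum (f := fun k : ℕ => ((k : ℝ) + 1) ^ α)
      (fun _ _ => by positivity) (Finset.left_mem_Ico.2 hpq)
  rw [det_opaMat2_unitBlock α hpq, Complex.ofReal_ne_zero]
  exact (add_pos_of_nonneg_of_pos (mul_nonneg (by positivity) (sub_nonneg.2 hp))
    (by positivity)).ne'

theorem tendsto_det_opaMat2_unitBlock_dyadic (α : ℝ) :
    Tendsto (fun n => (opaMat2 α (unitBlock α n (2 * n + 1))).det) atTop (𝓝[≠] 0) := by
  refine tendsto_nhdsWithin_iff.2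
    ⟨?_, Eventually.of_forall fun n => det_opaMat2_unitBlock_ne_zero α (by omega)⟩
  have hleft := tendsto_rpow_div_weightSum_dyadic α (j := fun n => n) (fun _ => le_rfl)
    fun n => by omega
  have hright := tendsto_rpow_div_weightSum_dyadic α (j := fun n => 2 * n + 1)
    (fun n => by omega) fun _ => le_rfl
  have hdet := (Complex.continuous_ofReal.tendsto _).comp
    ((hleft.mul (hleft.const_sub 1)).add hright)
  rw [zero_mul, add_zero, Complex.ofReal_zero] at hdet
  exact hdet.congr fun n => (det_opaMat2_unitBlock α (by omega)).symm

/-- For every `α`, there are normalized `g_n ∈ D_α` whose degree-1 o.p.a. matrices `M_n`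
are invertible and satisfy `‖M_n⁻¹‖_F → ∞`. -/
theorem inverse_matrix_blowup (α : ℝ) :
    ∃ g : ℕ → ℕ → ℂ,
      (∀ n, MemD α (g n)) ∧ (∀ n, DNorm α (g n) = 1) ∧
      (∀ n, IsUnit (opaMat2 α (g n))) ∧
      Tendsto (fun n => frobNorm (opaMat2 α (g n))⁻¹) atTop atTop := by
  have hlt (n : ℕ) : n < 2 * n + 1 := by omega
  exact ⟨fun n => unitBlock α n (2 * n + 1),
    fun n => memD_unitBlock α n _,
    fun n => dnorm_unitBlock α (hlt n),
    fun n => (Matrix.isUnit_iff_isUnit_det _).2 (det_opaMat2_unitBlock_ne_zero α (hlt n)).isUnit,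
    tendsto_frobNorm_inv_atTop (tendsto_det_opaMat2_unitBlock_dyadic α)⟩
end
end

section
/- For every integer n ≥ 1 and every z in the open unit disc 𝔻, the function g_n(z) = exp(−(1+z)/((1 + 1/n) − z)) satisfies e^{−2n} ≤ |g_n(z)| < 1. -/
open Filter Topology

noncomputable section

/-!
Since `‖exp (-w)‖ = exp (-Re w)`, the bounds say `0 < Re w ≤ 2 / ε` for
`w = (1 + z) / (1 + ε - z)` and `ε = 1 / n`. Multiplying `w` by `‖1 + ε - z‖²` turns its real part
into `ε (1 + Re z) + (1 - ‖z‖²)`, which is positive on the closed disc except at `-1`. For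
`Re w ≤ ‖w‖ ≤ 2 / ε`, note that `‖1 + z‖ ≤ 2` and that the closed disc lies at distance at
least `ε` from the pole `1 + ε`.
-/

section ClosedDisc

variable {z : ℂ} {ε : ℝ}

lemma one_add_re_pos_of_norm_le_one (hz : ‖z‖ ≤ 1) (hz' : z ≠ -1) : 0 < 1 + z.re := by
  have hne : 1 + z ≠ 0 := fun h => hz' (eq_neg_of_add_eq_zero_right h)
  have hsq : ‖1 + z‖ ^ 2 = 1 + 2 * z.re + ‖z‖ ^ 2 := by
    simp only [Complex.sq_norm, Complex.normSq_add, map_one, one_mul, Complex.conj_re]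
    ring
  have hz_sq : ‖z‖ ^ 2 ≤ 1 := pow_le_one₀ (norm_nonneg z) hz
  have hpos : 0 < ‖1 + z‖ ^ 2 := pow_pos (norm_pos_iff.mpr hne) 2
  linarith

lemma le_norm_one_add_sub (hz : ‖z‖ ≤ 1) (ε : ℝ) : ε ≤ ‖1 + (ε : ℂ) - z‖ :=
  calc ε ≤ (1 + (ε : ℂ) - z).re := by
        simp only [Complex.sub_re, Complex.add_re, Complex.one_re, Complex.ofReal_re]
        linarith [z.re_le_norm]
    _ ≤ ‖1 + (ε : ℂ) - z‖ := Complex.re_le_norm _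

lemma norm_one_add_div_one_add_sub_le (hε : 0 < ε) (hz : ‖z‖ ≤ 1) :
    ‖(1 + z) / (1 + (ε : ℂ) - z)‖ ≤ 2 / ε := by
  have hnum : ‖1 + z‖ ≤ 2 :=
    calc ‖1 + z‖ ≤ ‖(1 : ℂ)‖ + ‖z‖ := norm_add_le 1 z
      _ ≤ 2 := by rw [norm_one]; linarith
  rw [norm_div]
  exact div_le_div₀ zero_le_two hnum hε (le_norm_one_add_sub hz ε)

lemma re_one_add_div_one_add_sub (z : ℂ) (ε : ℝ) :
    ((1 + z) / (1 + (ε : ℂ) - z)).re =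
      (ε * (1 + z.re) + (1 - ‖z‖ ^ 2)) / ‖1 + (ε : ℂ) - z‖ ^ 2 := by
  rw [Complex.div_re, ← add_div, Complex.sq_norm, Complex.sq_norm, Complex.normSq_apply z]
  congr 1
  simp only [Complex.add_re, Complex.add_im, Complex.sub_re, Complex.sub_im, Complex.one_re,
    Complex.one_im, Complex.ofReal_re, Complex.ofReal_im]
  ring

lemma re_one_add_div_one_add_sub_pos (hε : 0 < ε) (hz : ‖z‖ ≤ 1) (hz' : z ≠ -1) :
    0 < ((1 + z) / (1 + (ε : ℂ) - z)).re := by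
  rw [re_one_add_div_one_add_sub]
  have hden : 0 < ‖1 + (ε : ℂ) - z‖ := hε.trans_le (le_norm_one_add_sub hz ε)
  have hre : 0 < ε * (1 + z.re) := mul_pos hε (one_add_re_pos_of_norm_le_one hz hz')
  have hz_sq : 0 ≤ 1 - ‖z‖ ^ 2 := sub_nonneg.mpr (pow_le_one₀ (norm_nonneg z) hz)
  positivity

end ClosedDisc

theorem singular_inner_perturbation_bounds_general {ε : ℝ} (hε : 0 < ε) {z : ℂ} (hz : ‖z‖ ≤ 1) :
    Real.exp (-(2 / ε)) ≤ ‖Complex.exp (-((1 + z) / (1 + (ε : ℂ) - z)))‖ ∧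
    (z ≠ -1 → ‖Complex.exp (-((1 + z) / (1 + (ε : ℂ) - z)))‖ < 1) := by
  rw [Complex.norm_exp, Complex.neg_re, Real.exp_le_exp, neg_le_neg_iff, Real.exp_lt_one_iff,
    neg_lt_zero]
  exact ⟨(Complex.re_le_norm _).trans (norm_one_add_div_one_add_sub_le hε hz),
    re_one_add_div_one_add_sub_pos hε hz⟩

/-- For `n ≥ 1` and `z ∈ 𝔻`, `e^{-2n} ≤ |exp(-(1+z)/((1+1/n) - z))| < 1`. -/
theorem singular_inner_perturbation_bounds (n : ℕ) (hn : 1 ≤ n) (z : ℂ) (hz : ‖z‖ < 1) :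
    Real.exp (-(2 * (n : ℝ))) ≤
      ‖Complex.exp (-((1 + z) / ((1 + 1 / (n : ℂ)) - z)))‖ ∧
    ‖Complex.exp (-((1 + z) / ((1 + 1 / (n : ℂ)) - z)))‖ < 1 := by
  have hz' : z ≠ -1 := by rintro rfl; simp at hz
  simpa [hz'] using singular_inner_perturbation_bounds_general
    (one_div_pos.mpr (Nat.cast_pos.mpr hn)) hz.le
end
end

section
/- Let g(z) = exp(−(1+z)/(1−z)) and, for each integer n ≥ 1, g_n(z) = exp(−(1+z)/((1 + 1/n) − z)). Then g and each g_n are bounded analytic functions on the unit disc 𝔻, hence belong to the space D_0 = H² (their Taylor coefficient sequences are square-summable), and ‖g_n − g‖_0 → 0 as n → ∞, i.e., the Taylor coefficients of g_n converge to those of g in the ℓ² norm. -/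
open Filter Topology

noncomputable section

/-!
The map `z ↦ (1 + z) / (1 + s - z)` sends the disc into the right half-plane for every `s ≥ 0`, so
all the functions are bounded by `1`. By Parseval on the circles `|z| = r` and dominated convergence
as `r → 1`, the `H²` norm of a bounded analytic function with radial limits almost everywhere is the
`L²` norm of these limits. The functions at hand extend continuously to the unit circle minus the
point `1`, where they converge pointwise, so a second use of dominated convergence, now as `s → 0`,
gives convergence in `H²`.
-/

section Parseval

open AddCircle MeasureTheory

lemma hasSum_norm_sq_of_orthonormal {𝕜 E ι : Type*} [RCLike 𝕜] [NormedAddCommGroup E]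
    [InnerProductSpace 𝕜 E] {e : ι → E} (he : Orthonormal 𝕜 e) {c : ι → 𝕜} {v : E}
    (hv : HasSum (fun i => c i • e i) v) : HasSum (fun i => ‖c i‖ ^ 2) (‖v‖ ^ 2) := by
  have hpartial (s : Finset ι) : ‖∑ i ∈ s, c i • e i‖ ^ 2 = ∑ i ∈ s, ‖c i‖ ^ 2 := by
    simpa using he.orthogonalFamily.norm_sum c s
  simpa only [HasSum, hpartial] using (Tendsto.norm hv).pow 2

lemma hasSum_norm_sq_of_hasSum_fourier {T : ℝ} [Fact (0 < T)] {ι : Type*} {n : ι → ℤ}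
    (hn : n.Injective) {c : ι → ℂ} {F : C(AddCircle T, ℂ)}
    (hF : HasSum (fun i => c i • (fourier (n i) : C(AddCircle T, ℂ))) F) :
    HasSum (fun i => ‖c i‖ ^ 2) (∫ x, ‖F x‖ ^ 2 ∂haarAddCircle) := by
  let toL2 := ContinuousMap.toLp (E := ℂ) 2 (haarAddCircle (T := T)) ℂ
  have hF_L2 : HasSum (fun i => c i • fourierLp (T := T) 2 (n i)) (toL2 F) := by
    simpa only [Function.comp_def, map_smul] using toL2.hasSum hF
  have hnorm : ‖toL2 F‖ ^ 2 = ∫ x, ‖F x‖ ^ 2 ∂haarAddCircle := by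
    have h : ((‖toL2 F‖ ^ 2 : ℝ) : ℂ) = ∫ x, ((‖F x‖ ^ 2 : ℝ) : ℂ) ∂haarAddCircle := by
      simpa [Complex.mul_conj', inner_self_eq_norm_sq_to_K] using
        ContinuousMap.inner_toLp (𝕜 := ℂ) (haarAddCircle (T := T)) F F
    rwa [integral_complex_ofReal, Complex.ofReal_inj] at h
  exact hnorm ▸ hasSum_norm_sq_of_orthonormal (orthonormal_fourier.comp n hn) hF_L2

end Parseval

/-- `f` is the sum on the unit disc of the power series with coefficients `c`; nothing is said
about `f` elsewhere. -/
def HasTaylorCoeffs (f : ℂ → ℂ) (c : ℕ → ℂ) : Prop :=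
  ∀ z : ℂ, ‖z‖ < 1 → HasSum (fun k : ℕ => c k * z ^ k) (f z)

/-- `F` is almost everywhere the radial limit of `f` on the unit circle, which is parametrized
by `AddCircle.toCircle`. -/
def HasRadialLimits (f : ℂ → ℂ) (F : UnitAddCircle → ℂ) : Prop :=
  ∀ᵐ x ∂AddCircle.haarAddCircle,
    Tendsto (fun r : ℝ => f (r * AddCircle.toCircle x)) (𝓝[<] 1) (𝓝 (F x))

section Hardy

open AddCircle MeasureTheory

variable {f : ℂ → ℂ} {c : ℕ → ℂ} {F : UnitAddCircle → ℂ} {B r : ℝ}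

lemma exists_hasTaylorCoeffs (hf : DifferentiableOn ℂ f (Metric.ball 0 1)) :
    ∃ c : ℕ → ℂ, HasTaylorCoeffs f c := by
  refine ⟨fun k => (k.factorial : ℂ)⁻¹ * iteratedDeriv k f 0, fun z hz => ?_⟩
  simpa [mul_assoc, mul_comm, mul_left_comm] using
    Complex.hasSum_taylorSeries_on_ball hf (mem_ball_zero_iff.2 hz)

lemma HasTaylorCoeffs.sub {g : ℂ → ℂ} {d : ℕ → ℂ} (hf : HasTaylorCoeffs f c)
    (hg : HasTaylorCoeffs g d) : HasTaylorCoeffs (f - g) (c - d) := fun z hz => by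
  simpa only [Pi.sub_apply, sub_mul] using (hf z hz).sub (hg z hz)

lemma norm_mul_toCircle {T : ℝ} (hr : 0 ≤ r) (x : AddCircle T) :
    ‖(r : ℂ) * toCircle x‖ = r := by
  rw [norm_mul, Circle.norm_coe, mul_one, Complex.norm_of_nonneg hr]

lemma HasTaylorCoeffs.exists_hasSum_fourier (hf : HasTaylorCoeffs f c) (hr₀ : 0 ≤ r)
    (hr₁ : r < 1) : ∃ G : C(UnitAddCircle, ℂ), (∀ x, G x = f (r * toCircle x)) ∧
      HasSum (fun k : ℕ => (c k * (r : ℂ) ^ k) • (fourier k : C(UnitAddCircle, ℂ))) G := by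
  have hsummable :
      Summable fun k : ℕ => (c k * (r : ℂ) ^ k) • (fourier k : C(UnitAddCircle, ℂ)) := by
    refine .of_norm ?_
    simpa [norm_smul, fourier_norm] using
      (hf r (by simpa [abs_of_nonneg hr₀] using hr₁)).summable.norm
  refine ⟨_, fun x => ?_, hsummable.hasSum⟩
  refine (ContinuousMap.hasSum_apply hsummable.hasSum x).unique ?_
  simpa [fourier_apply, toCircle_nsmul, mul_pow, mul_assoc] using
    hf (r * toCircle x) (by rwa [norm_mul_toCircle hr₀])

lemma HasTaylorCoeffs.continuous_circle (hf : HasTaylorCoeffs f c) (hr₀ : 0 ≤ r)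
    (hr₁ : r < 1) : Continuous fun x : UnitAddCircle => f (r * toCircle x) := by
  obtain ⟨G, hG, -⟩ := hf.exists_hasSum_fourier hr₀ hr₁
  simpa only [← hG] using G.continuous

lemma HasTaylorCoeffs.hasSum_norm_sq_mul_pow (hf : HasTaylorCoeffs f c) (hr₀ : 0 ≤ r)
    (hr₁ : r < 1) : HasSum (fun k => (‖c k‖ * r ^ k) ^ 2)
      (∫ x : UnitAddCircle, ‖f (r * toCircle x)‖ ^ 2 ∂haarAddCircle) := by
  obtain ⟨G, hG, hsum⟩ := hf.exists_hasSum_fourier hr₀ hr₁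
  simpa [hG, abs_of_nonneg hr₀] using
    hasSum_norm_sq_of_hasSum_fourier Nat.cast_injective hsum

lemma HasTaylorCoeffs.summable_norm_sq (hf : HasTaylorCoeffs f c)
    (hB : ∀ z, ‖z‖ < 1 → ‖f z‖ ≤ B) : Summable fun k => ‖c k‖ ^ 2 := by
  refine summable_of_sum_range_le (c := B ^ 2) (fun k => by positivity) fun N => ?_
  have hpartial : ∀ᶠ r : ℝ in 𝓝[<] 1, ∑ k ∈ Finset.range N, (‖c k‖ * r ^ k) ^ 2 ≤ B ^ 2 := by
    filter_upwards [Ioo_mem_nhdsLT zero_lt_one] with r ⟨hr₀, hr₁⟩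
    have hbound (x : UnitAddCircle) : ‖f (r * toCircle x)‖ ^ 2 ≤ B ^ 2 := by
      gcongr
      exact hB _ (by rwa [norm_mul_toCircle hr₀.le])
    calc ∑ k ∈ Finset.range N, (‖c k‖ * r ^ k) ^ 2
        ≤ ∫ x : UnitAddCircle, ‖f (r * toCircle x)‖ ^ 2 ∂haarAddCircle :=
          sum_le_hasSum _ (fun k _ => by positivity) (hf.hasSum_norm_sq_mul_pow hr₀.le hr₁)
      _ ≤ ∫ _ : UnitAddCircle, B ^ 2 ∂haarAddCircle :=
          integral_mono_of_nonneg (.of_forall fun x => by positivity) (integrable_const _)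
            (.of_forall hbound)
      _ = B ^ 2 := by simp
  have hcont : Continuous fun r : ℝ => ∑ k ∈ Finset.range N, (‖c k‖ * r ^ k) ^ 2 := by fun_prop
  exact le_of_tendsto (by simpa using (hcont.tendsto 1).mono_left nhdsWithin_le_nhds) hpartial

lemma HasTaylorCoeffs.tsum_norm_sq_eq_integral (hf : HasTaylorCoeffs f c)
    (hB : ∀ z, ‖z‖ < 1 → ‖f z‖ ≤ B) (hF : HasRadialLimits f F) :
    ∑' k, ‖c k‖ ^ 2 = ∫ x, ‖F x‖ ^ 2 ∂haarAddCircle := by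
  have hr : ∀ᶠ r : ℝ in 𝓝[<] 1, r ∈ Set.Ioo 0 1 := Ioo_mem_nhdsLT zero_lt_one
  have hseries : Tendsto (fun r : ℝ => ∑' k, (‖c k‖ * r ^ k) ^ 2) (𝓝[<] 1)
      (𝓝 (∑' k, ‖c k‖ ^ 2)) := by
    refine tendsto_tsum_of_dominated_convergence (hf.summable_norm_sq hB) (fun k => ?_) ?_
    · have hcont : Continuous fun r : ℝ => (‖c k‖ * r ^ k) ^ 2 := by fun_prop
      simpa using (hcont.tendsto 1).mono_left nhdsWithin_le_nhds
    · filter_upwards [hr] with r ⟨hr₀, hr₁⟩ k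
      rw [Real.norm_of_nonneg (by positivity)]
      gcongr
      exact mul_le_of_le_one_right (norm_nonneg _) (pow_le_one₀ hr₀.le hr₁.le)
  have hintegral : Tendsto
      (fun r : ℝ => ∫ x : UnitAddCircle, ‖f (r * toCircle x)‖ ^ 2 ∂haarAddCircle) (𝓝[<] 1)
      (𝓝 (∫ x, ‖F x‖ ^ 2 ∂haarAddCircle)) := by
    refine tendsto_integral_filter_of_dominated_convergence (fun _ => B ^ 2) ?_ ?_
      (integrable_const _) (hF.mono fun x hx => hx.norm.pow 2)
    · filter_upwards [hr] with r ⟨hr₀, hr₁⟩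
      exact ((hf.continuous_circle hr₀.le hr₁).norm.pow 2).aestronglyMeasurable
    · filter_upwards [hr] with r ⟨hr₀, hr₁⟩
      refine .of_forall fun x => ?_
      rw [norm_pow, norm_norm]
      gcongr
      exact hB _ (by rwa [norm_mul_toCircle hr₀.le])
  refine tendsto_nhds_unique (hseries.congr' ?_) hintegral
  filter_upwards [hr] with r ⟨hr₀, hr₁⟩
  exact (hf.hasSum_norm_sq_mul_pow hr₀.le hr₁).tsum_eq

lemma HasRadialLimits.ae_norm_le (hF : HasRadialLimits f F) (hB : ∀ z, ‖z‖ < 1 → ‖f z‖ ≤ B) :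
    ∀ᵐ x ∂haarAddCircle, ‖F x‖ ≤ B := by
  filter_upwards [hF] with x hx
  refine le_of_tendsto hx.norm ?_
  filter_upwards [Ioo_mem_nhdsLT zero_lt_one] with r ⟨hr₀, hr₁⟩
  exact hB _ (by rwa [norm_mul_toCircle hr₀.le])

lemma HasRadialLimits.aestronglyMeasurable (hF : HasRadialLimits f F)
    (hf : HasTaylorCoeffs f c) : AEStronglyMeasurable F haarAddCircle := by
  obtain ⟨r, -, hr, hr_lim⟩ := exists_seq_strictMono_tendsto' (zero_lt_one (α := ℝ))
  refine aestronglyMeasurable_of_tendsto_ae atTop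
    (fun n => (hf.continuous_circle (hr n).1.le (hr n).2).aestronglyMeasurable) ?_
  have hr_left : Tendsto r atTop (𝓝[<] 1) :=
    tendsto_nhdsWithin_iff.2 ⟨hr_lim, .of_forall fun n => (hr n).2⟩
  exact hF.mono fun x hx => hx.comp hr_left

theorem tendsto_tsum_norm_sq_zero {ι : Type*} {l : Filter ι} [l.IsCountablyGenerated]
    {f : ι → ℂ → ℂ} {c : ι → ℕ → ℂ} {F : ι → UnitAddCircle → ℂ}
    (hf : ∀ᶠ i in l, HasTaylorCoeffs (f i) (c i))
    (hB : ∀ᶠ i in l, ∀ z, ‖z‖ < 1 → ‖f i z‖ ≤ B)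
    (hF : ∀ᶠ i in l, HasRadialLimits (f i) (F i))
    (hlim : ∀ᵐ x ∂haarAddCircle, Tendsto (F · x) l (𝓝 0)) :
    Tendsto (fun i => ∑' k, ‖c i k‖ ^ 2) l (𝓝 0) := by
  have hintegral : Tendsto (fun i => ∫ x, ‖F i x‖ ^ 2 ∂haarAddCircle) l
      (𝓝 (∫ _ : UnitAddCircle, (0 : ℝ) ∂haarAddCircle)) := by
    refine tendsto_integral_filter_of_dominated_convergence (fun _ => B ^ 2) ?_ ?_
      (integrable_const _) (hlim.mono fun x hx => by simpa using hx.norm.pow 2)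
    · filter_upwards [hf, hF] with i hf hF
      exact (hF.aestronglyMeasurable hf).norm.pow 2
    · filter_upwards [hB, hF] with i hB hF
      filter_upwards [hF.ae_norm_le hB] with x hx
      rw [norm_pow, norm_norm]
      gcongr
  rw [integral_zero] at hintegral
  refine hintegral.congr' ?_
  filter_upwards [hf, hB, hF] with i hf hB hF
  exact (hf.tsum_norm_sq_eq_integral hB hF).symm

lemma hasRadialLimits_of_ae_continuousAt
    (hf : ∀ᵐ x : UnitAddCircle ∂haarAddCircle, ContinuousAt f (toCircle x)) :
    HasRadialLimits f fun x => f (toCircle x) := by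
  filter_upwards [hf] with x hx
  have hray : Tendsto (fun r : ℝ => (r : ℂ) * toCircle x) (𝓝[<] 1) (𝓝 (toCircle x : ℂ)) := by
    have hcont : Continuous fun r : ℝ => (r : ℂ) * toCircle x := by fun_prop
    simpa using (hcont.tendsto 1).mono_left nhdsWithin_le_nhds
  exact hx.tendsto.comp hray

lemma ae_toCircle_ne_one : ∀ᵐ x : UnitAddCircle ∂haarAddCircle, (toCircle x : ℂ) ≠ 1 := by
  have hatom : haarAddCircle {(0 : UnitAddCircle)} = 0 := by
    have hvol : (volume : Measure UnitAddCircle) = haarAddCircle := by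
      simp [volume_eq_smul_haarAddCircle]
    rw [← hvol, ← Metric.closedBall_zero, AddCircle.volume_closedBall]
    simp
  filter_upwards [compl_mem_ae_iff.2 hatom] with x hx hx_one
  exact hx (injective_toCircle one_ne_zero (Circle.ext (by simpa using hx_one)))

end Hardy

/-- The function `z ↦ exp (-(1 + z) / (1 + s - z))`: the singular inner function `g` for `s = 0`,
and its perturbation `g_n` for `s = 1 / n`. -/
def perturbedSingularInner (s : ℝ) (z : ℂ) : ℂ :=
  Complex.exp (-((1 + z) / ((1 + s) - z)))

namespace perturbedSingularInner

variable {s : ℝ} {z : ℂ}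

lemma zero_left (z : ℂ) :
    perturbedSingularInner 0 z = Complex.exp (-((1 + z) / (1 - z))) := by
  simp [perturbedSingularInner]

lemma one_div_natCast (n : ℕ) (z : ℂ) :
    perturbedSingularInner (1 / n) z = Complex.exp (-((1 + z) / ((1 + 1 / (n : ℂ)) - z))) := by
  simp [perturbedSingularInner]

lemma denom_ne_zero (hs : 0 ≤ s) (hz : ‖z‖ ≤ 1) (hz_one : z ≠ 1) : (1 + s : ℂ) - z ≠ 0 := by
  intro h
  obtain rfl : ((1 + s : ℝ) : ℂ) = z := by push_cast; exact sub_eq_zero.1 h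
  rw [Complex.norm_real, Real.norm_of_nonneg (by positivity)] at hz
  exact hz_one (by simp [show s = 0 by linarith])

-- At `s = 0`, `z = 1` the quotient in the exponent is the junk value `2 / 0 = 0`.
lemma norm_le_one (hs : 0 ≤ s) (hz : ‖z‖ ≤ 1) : ‖perturbedSingularInner s z‖ ≤ 1 := by
  have hz_sq : z.re * z.re + z.im * z.im ≤ 1 := by
    rw [← Complex.normSq_apply, Complex.normSq_eq_norm_sq]
    exact pow_le_one₀ (norm_nonneg z) hz
  have hz_re : -1 ≤ z.re := (abs_le.1 ((Complex.abs_re_le_norm z).trans hz)).1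
  have hre : 0 ≤ ((1 + z) / ((1 + s) - z)).re := by
    rw [Complex.div_re, ← add_div]
    refine div_nonneg ?_ (Complex.normSq_nonneg _)
    simp only [Complex.add_re, Complex.sub_re, Complex.one_re, Complex.ofReal_re, Complex.add_im,
      Complex.sub_im, Complex.one_im, Complex.ofReal_im]
    nlinarith [mul_nonneg hs (neg_le_iff_add_nonneg'.1 hz_re)]
  rw [perturbedSingularInner, Complex.norm_exp]
  simpa using hre

lemma differentiableOn (hs : 0 ≤ s) :
    DifferentiableOn ℂ (perturbedSingularInner s) (Metric.ball 0 1) := by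
  intro z hz
  rw [mem_ball_zero_iff] at hz
  have hdenom : (1 + s : ℂ) - z ≠ 0 := denom_ne_zero hs hz.le (by rintro rfl; simp at hz)
  unfold perturbedSingularInner
  fun_prop (disch := assumption)

lemma continuousAt_uncurry (hs : 0 ≤ s) (hz : ‖z‖ ≤ 1) (hz_one : z ≠ 1) :
    ContinuousAt (Function.uncurry perturbedSingularInner) (s, z) := by
  have hdenom : (1 + s : ℂ) - z ≠ 0 := denom_ne_zero hs hz hz_one
  unfold perturbedSingularInner Function.uncurry
  fun_prop (disch := assumption)

lemma hasRadialLimits_sub (hs : 0 ≤ s) :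
    HasRadialLimits (perturbedSingularInner s - perturbedSingularInner 0) fun x =>
      perturbedSingularInner s (AddCircle.toCircle x) -
        perturbedSingularInner 0 (AddCircle.toCircle x) := by
  refine hasRadialLimits_of_ae_continuousAt ?_
  filter_upwards [ae_toCircle_ne_one] with x hx
  have hcont {t : ℝ} (ht : 0 ≤ t) :
      ContinuousAt (perturbedSingularInner t) (AddCircle.toCircle x) :=
    (continuousAt_uncurry ht (Circle.norm_coe _).le hx).comp
      (Continuous.prodMk_right t).continuousAt
  exact (hcont hs).sub (hcont le_rfl)

theorem tendsto_tsum_norm_sq_sub {a : ℝ → ℕ → ℂ}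
    (ha : ∀ s, 0 ≤ s → HasTaylorCoeffs (perturbedSingularInner s) (a s)) :
    Tendsto (fun s => ∑' k, ‖a s k - a 0 k‖ ^ 2) (𝓝[≥] 0) (𝓝 0) := by
  have hnonneg : ∀ᶠ s : ℝ in 𝓝[≥] 0, 0 ≤ s := self_mem_nhdsWithin
  refine tendsto_tsum_norm_sq_zero (B := 1 + 1)
    (hnonneg.mono fun s hs => (ha s hs).sub (ha 0 le_rfl))
    (hnonneg.mono fun s hs z hz => ?_) (hnonneg.mono fun s hs => hasRadialLimits_sub hs) ?_
  · exact norm_sub_le_of_le (norm_le_one hs hz.le) (norm_le_one le_rfl hz.le)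
  · filter_upwards [ae_toCircle_ne_one] with x hx
    have hcont : ContinuousAt (perturbedSingularInner · (AddCircle.toCircle x)) 0 :=
      ContinuousAt.comp (f := fun s : ℝ => (s, (AddCircle.toCircle x : ℂ)))
        (continuousAt_uncurry le_rfl (Circle.norm_coe _).le hx)
        (Continuous.prodMk_left _).continuousAt
    simpa using (hcont.tendsto.mono_left nhdsWithin_le_nhds).sub_const
      (perturbedSingularInner 0 (AddCircle.toCircle x))

end perturbedSingularInner

theorem singular_inner_H2_convergence_general :
    (∀ s : ℝ, 0 ≤ s → ∀ z : ℂ, ‖z‖ < 1 → ‖perturbedSingularInner s z‖ ≤ 1) ∧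
    (∀ s : ℝ, 0 ≤ s → DifferentiableOn ℂ (perturbedSingularInner s) (Metric.ball 0 1)) ∧
    ∃ a : ℝ → ℕ → ℂ,
      (∀ s : ℝ, 0 ≤ s → HasTaylorCoeffs (perturbedSingularInner s) (a s)) ∧
      (∀ s : ℝ, 0 ≤ s → Summable fun k => ‖a s k‖ ^ 2) ∧
      Tendsto (fun s => Real.sqrt (∑' k, ‖a s k - a 0 k‖ ^ 2)) (𝓝[≥] 0) (𝓝 0) := by
  have hbound (s : ℝ) (hs : 0 ≤ s) (z : ℂ) (hz : ‖z‖ < 1) : ‖perturbedSingularInner s z‖ ≤ 1 :=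
    perturbedSingularInner.norm_le_one hs hz.le
  choose! a ha using fun s (hs : 0 ≤ s) =>
    exists_hasTaylorCoeffs (perturbedSingularInner.differentiableOn hs)
  refine ⟨hbound, fun s hs => perturbedSingularInner.differentiableOn hs, a, ha,
    fun s hs => (ha s hs).summable_norm_sq (hbound s hs), ?_⟩
  simpa using (perturbedSingularInner.tendsto_tsum_norm_sq_sub ha).sqrt

/-- The singular inner function `g(z) = exp(-(1+z)/(1-z))` and its perturbations
`g_n(z) = exp(-(1+z)/((1+1/n) - z))` are bounded analytic functions on `𝔻`, belong to
`H² = D_0` (square-summable Taylor coefficients), and `‖g_n - g‖_0 → 0`. -/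
theorem singular_inner_H2_convergence :
    (∃ B : ℝ, ∀ z : ℂ, ‖z‖ < 1 → ‖Complex.exp (-((1 + z) / (1 - z)))‖ ≤ B) ∧
    (∀ n : ℕ, 1 ≤ n → ∃ B : ℝ, ∀ z : ℂ, ‖z‖ < 1 →
      ‖Complex.exp (-((1 + z) / ((1 + 1 / (n : ℂ)) - z)))‖ ≤ B) ∧
    DifferentiableOn ℂ (fun z : ℂ => Complex.exp (-((1 + z) / (1 - z))))
      (Metric.ball 0 1) ∧
    (∀ n : ℕ, 1 ≤ n →
      DifferentiableOn ℂ (fun z : ℂ => Complex.exp (-((1 + z) / ((1 + 1 / (n : ℂ)) - z))))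
        (Metric.ball 0 1)) ∧
    ∃ a : ℕ → ℂ, ∃ b : ℕ → ℕ → ℂ,
      (∀ z : ℂ, ‖z‖ < 1 →
        HasSum (fun k : ℕ => a k * z ^ k) (Complex.exp (-((1 + z) / (1 - z))))) ∧
      (∀ n : ℕ, 1 ≤ n → ∀ z : ℂ, ‖z‖ < 1 →
        HasSum (fun k : ℕ => b n k * z ^ k)
          (Complex.exp (-((1 + z) / ((1 + 1 / (n : ℂ)) - z))))) ∧
      Summable (fun k : ℕ => ‖a k‖ ^ 2) ∧
      (∀ n : ℕ, 1 ≤ n → Summable (fun k : ℕ => ‖b n k‖ ^ 2)) ∧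
      Tendsto (fun n : ℕ => Real.sqrt (∑' k : ℕ, ‖b n k - a k‖ ^ 2)) atTop (𝓝 0) := by
  simp only [← perturbedSingularInner.zero_left, ← perturbedSingularInner.one_div_natCast]
  obtain ⟨hbound, hdiff, a, ha, hsum, hlim⟩ := singular_inner_H2_convergence_general
  have hinv (n : ℕ) : (0 : ℝ) ≤ 1 / n := by positivity
  have hinv_lim : Tendsto (fun n : ℕ => (1 / n : ℝ)) atTop (𝓝[≥] 0) :=
    tendsto_nhdsWithin_iff.2 ⟨tendsto_one_div_atTop_nhds_zero_nat, .of_forall hinv⟩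
  exact ⟨⟨1, hbound 0 le_rfl⟩, fun n _ => ⟨1, hbound _ (hinv n)⟩, hdiff 0 le_rfl,
    fun n _ => hdiff _ (hinv n), a 0, fun n => a (1 / n), ha 0 le_rfl, fun n _ => ha _ (hinv n),
    hsum 0 le_rfl, fun n _ => hsum _ (hinv n), hlim.comp hinv_lim⟩
end
end
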